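/- arXiv:1905.10153 — 3 statements merged into one kernel-verified Lean document; each statement's English description precedes it below -/
import Mathlib

section
/- If p is an odd prime and G is a non-cyclic group of order p^λ, then the total number of subgroups of G is at least (p+1)(λ−1)+2. -/
/-!
Counting elements shows that a group covered by subgroups of index `p` needs at least `p + 1` of
them, and a non-cyclic finite `p`-group is covered by its subgroups of index `p`. If `M` is one of
these, the other ones and `G` itself are not contained in `M`, so `G` has at least `p + 1` more
subgroups than `M`. To iterate this, `M` must be chosen non-cyclic.

This is possible for odd `p` and `p ^ 2 < |G|`. Suppose that all subgroups of index `p` are cyclic,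
and let `H ≠ K` be two of them. Then `H ⊓ K` is central in `H ⊔ K = G` and contains all commutators
and `p`-th powers, so for odd `p` the map `x ↦ x ^ p` is an endomorphism with image in `H ⊓ K`. Its
kernel thus has order at least `[G : H ⊓ K] > p`. But it is proper, as the cyclic group
`H` of order `|G| / p > p` is not killed by `x ↦ x ^ p`, so it is contained in a cyclic subgroup,
and having exponent `p` it has order at most `p`.
-/

section PowMap

theorem semiconjBy_pow_of_commute {M : Type*} [Monoid M] {x y c : M} (hcy : Commute c y)
    (hyx : SemiconjBy y x (x * c)) (n : ℕ) : SemiconjBy (y ^ n) x (x * c ^ n) := by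
  induction n with
  | zero => simp only [pow_zero, mul_one, SemiconjBy.one_left]
  | succ n ih =>
    have hcomm : SemiconjBy (y ^ n) c c := hcy.symm.pow_left n
    have hstep : SemiconjBy (y ^ n) (x * c) (x * c ^ n * c) := ih.mul_right hcomm
    rw [mul_assoc, ← pow_succ] at hstep
    rw [pow_succ y]
    exact hstep.mul_left hyx

theorem mul_pow_eq_mul_pow_choose_two {M : Type*} [Monoid M] {x y c : M} (hcx : Commute c x)
    (hcy : Commute c y) (hyx : SemiconjBy y x (x * c)) (n : ℕ) :
    (x * y) ^ n = x ^ n * y ^ n * c ^ n.choose 2 := by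
  induction n with
  | zero => simp only [pow_zero, Nat.choose_zero_succ, mul_one]
  | succ n ih =>
    have hchoose : (n + 1).choose 2 = n + n.choose 2 := by
      rw [Nat.choose_succ_succ' n 1, Nat.choose_one_right]
    calc (x * y) ^ (n + 1)
        = x ^ n * y ^ n * (c ^ n.choose 2 * (x * y)) := by rw [pow_succ, ih, mul_assoc]
      _ = x ^ n * y ^ n * (x * y * c ^ n.choose 2) := by
          rw [((hcx.mul_right hcy).pow_left _).eq]
      _ = x ^ n * (y ^ n * x) * y * c ^ n.choose 2 := by simp only [mul_assoc]
      _ = x ^ n * (x * (c ^ n * y ^ n)) * y * c ^ n.choose 2 := by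
          rw [(semiconjBy_pow_of_commute hcy hyx n).eq, mul_assoc x]
      _ = x ^ (n + 1) * (c ^ n * y ^ (n + 1)) * c ^ n.choose 2 := by
          rw [pow_succ, pow_succ]
          simp only [mul_assoc]
      _ = x ^ (n + 1) * y ^ (n + 1) * c ^ (n + 1).choose 2 := by
          rw [(hcy.pow_pow n (n + 1)).eq, hchoose, pow_add c]
          simp only [mul_assoc]

open scoped commutatorElement in
theorem mul_pow_of_odd_of_commutator_le_center {G : Type*} [Group G] {n : ℕ} (hn : Odd n)
    (hcomm : commutator G ≤ Subgroup.center G) (hpow : ∀ x : G, x ^ n ∈ Subgroup.center G)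
    (x y : G) : (x * y) ^ n = x ^ n * y ^ n := by
  obtain ⟨c, hc, hyx⟩ : ∃ c ∈ Subgroup.center G, SemiconjBy y x (x * c) := by
    have hmem := hcomm (Subgroup.commutator_mem_commutator (Subgroup.mem_top y⁻¹)
      (Subgroup.mem_top x⁻¹))
    refine ⟨⁅y⁻¹, x⁻¹⁆, hmem, ?_⟩
    rw [SemiconjBy, mul_assoc, ← Subgroup.mem_center_iff.1 hmem y, commutatorElement_def]
    group
  have hcentral : ∀ g, Commute c g := fun g ↦ (Subgroup.mem_center_iff.1 hc g).symm
  have hcn : c ^ n = 1 := by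
    have hsemi := (semiconjBy_pow_of_commute (hcentral y) hyx n).eq
    rw [← Subgroup.mem_center_iff.1 (hpow y)] at hsemi
    simpa only [mul_assoc, mul_right_inj, right_eq_mul, mul_eq_right] using hsemi.symm
  obtain ⟨m, hm⟩ : n ∣ n.choose 2 := by
    obtain ⟨k, rfl⟩ := hn
    refine ⟨k, ?_⟩
    rw [Nat.choose_two_right, Nat.add_sub_cancel, Nat.mul_div_assoc _ (dvd_mul_right 2 k),
      Nat.mul_div_cancel_left k two_pos]
  rw [mul_pow_eq_mul_pow_choose_two (hcentral x) (hcentral y) hyx, hm, pow_mul, hcn, one_pow,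
    mul_one]

end PowMap

section Subgroup

variable {G : Type*} [Group G]

open scoped Pointwise in
theorem lt_ncard_of_cover_of_index_eq {S : Set (Subgroup G)} (hS : S.Finite) {n : ℕ} (hn : 1 < n)
    (hindex : ∀ H ∈ S, H.index = n) (hcover : ∀ x : G, ∃ H ∈ S, x ∈ H) : n < S.ncard := by
  classical
  have hunion : ⋃ H ∈ hS.toFinset, (1 : G) • (H : Set G) = Set.univ := by
    simpa [Set.eq_univ_iff_forall] using hcover
  have hsum : ∑ H ∈ hS.toFinset, (H.index : ℚ)⁻¹ = S.ncard / n := by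
    rw [Finset.sum_congr rfl fun H hH ↦ by rw [hindex H (hS.mem_toFinset.1 hH)],
      Finset.sum_const, nsmul_eq_mul, Set.ncard_eq_toFinset_card S hS, div_eq_mul_inv]
  have hn0 : (0 : ℚ) < n := by exact_mod_cast zero_lt_one.trans hn
  have hle : n ≤ S.ncard := by
    have hone := Subgroup.one_le_sum_inv_index_of_leftCoset_cover hunion
    rw [hsum, one_le_div hn0] at hone
    exact_mod_cast hone
  refine hle.lt_of_ne fun heq ↦ ?_
  obtain ⟨H, K, hH, hK, hne⟩ := (Set.one_lt_ncard_iff hS).1 (heq ▸ hn)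
  have hdisj := Subgroup.pairwiseDisjoint_leftCoset_cover_of_sum_inv_index_eq_one hunion
    (by rw [hsum, ← heq, div_self hn0.ne'])
  have hfin : ∀ L ∈ S, L.FiniteIndex := fun L hL ↦ ⟨hindex L hL ▸ (zero_lt_one.trans hn).ne'⟩
  have hHK : Disjoint (H : Set G) K := by
    simpa only [one_smul] using
      hdisj (x := H) (by simp [hH, hfin H hH]) (y := K) (by simp [hK, hfin K hK]) hne
  exact Set.disjoint_left.1 hHK H.one_mem K.one_mem

theorem isCoatom_of_index_prime {H : Subgroup G} (hH : H.index.Prime) : IsCoatom H := by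
  refine ⟨fun htop ↦ hH.ne_one (Subgroup.index_eq_one.2 htop), fun K hHK ↦ ?_⟩
  have : H.FiniteIndex := ⟨hH.ne_zero⟩
  rcases (Nat.dvd_prime hH).1 (Subgroup.index_dvd_of_le hHK.le) with hK | hK
  · exact Subgroup.index_eq_one.1 hK
  · exact absurd hK (Subgroup.index_strictAnti hHK).ne

theorem inf_le_center_of_sup_eq_top {H K : Subgroup G} [IsMulCommutative H] [IsMulCommutative K]
    (hHK : H ⊔ K = ⊤) : H ⊓ K ≤ Subgroup.center G := by
  rw [← SetLike.coe_subset_coe, ← Subgroup.centralizer_eq_top_iff_subset, ← top_le_iff, ← hHK]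
  exact sup_le
    ((Subgroup.le_centralizer H).trans (Subgroup.centralizer_le inf_le_left))
    ((Subgroup.le_centralizer K).trans (Subgroup.centralizer_le inf_le_right))

theorem commutator_le_inf_of_sup_eq_top {H K : Subgroup G} [H.Normal] [K.Normal]
    [IsMulCommutative H] [IsMulCommutative K] (hHK : H ⊔ K = ⊤) : commutator G ≤ H ⊓ K :=
  le_inf (Subgroup.Normal.commutator_le_of_self_sup_commutative_eq_top hHK inferInstance)
    (Subgroup.Normal.commutator_le_of_self_sup_commutative_eq_top (sup_comm H K ▸ hHK)
      inferInstance)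

theorem mul_pow_of_odd_of_sup_eq_top {H K : Subgroup G} [H.Normal] [K.Normal] [IsMulCommutative H]
    [IsMulCommutative K] (hHK : H ⊔ K = ⊤) {n : ℕ} (hn : Odd n) (hpow : ∀ x : G, x ^ n ∈ H ⊓ K)
    (x y : G) : (x * y) ^ n = x ^ n * y ^ n :=
  mul_pow_of_odd_of_commutator_le_center hn
    ((commutator_le_inf_of_sup_eq_top hHK).trans (inf_le_center_of_sup_eq_top hHK))
    (fun z ↦ inf_le_center_of_sup_eq_top hHK (hpow z)) x y

theorem natCard_dvd_of_isCyclic_of_forall_pow_eq_one [IsCyclic G] {n : ℕ} (h : ∀ x : G, x ^ n = 1) :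
    Nat.card G ∣ n := by
  rw [← IsCyclic.exponent_eq_card]
  exact Monoid.exponent_dvd_of_forall_pow_eq_one h

theorem natCard_subgroup_eq_ncard_Iic (H : Subgroup G) :
    Nat.card (Subgroup H) = (Set.Iic H).ncard :=
  (Nat.card_congr (Subgroup.MapSubtype.orderIso H).toEquiv).trans (Nat.card_coe_set_eq _)

theorem natCard_eq_pow_of_index_eq {n k : ℕ} (hn : 0 < n) (hG : Nat.card G = n ^ (k + 1))
    {H : Subgroup G} (hH : H.index = n) : Nat.card H = n ^ k := by
  apply Nat.eq_of_mul_eq_mul_right hn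
  rw [← pow_succ, ← hG, ← H.card_mul_index, hH]

end Subgroup

section PGroup

variable {G : Type*} [Group G] [Finite G] {p : ℕ} [Fact p.Prime]

theorem normal_of_isPGroup_of_index_eq (hG : IsPGroup p G) {H : Subgroup G} (hH : H.index = p) :
    H.Normal := by
  have := hG.isNilpotent
  have hcoatom : IsCoatom H := isCoatom_of_index_prime (hH ▸ Fact.out)
  exact Subgroup.NormalizerCondition.normal_of_coatom H
    Group.normalizerCondition_of_isNilpotent hcoatom

theorem exists_le_index_eq_of_isPGroup (hG : IsPGroup p G) {H : Subgroup G} (hH : H ≠ ⊤) :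
    ∃ K, H ≤ K ∧ K.index = p := by
  have hp : p.Prime := Fact.out
  obtain ⟨m, hm⟩ := IsPGroup.iff_card.1 (hG.to_subgroup H)
  obtain ⟨n, hn⟩ := IsPGroup.iff_card.1 hG
  have hmn : m < n := by
    rw [← Nat.pow_lt_pow_iff_right hp.one_lt, ← hm, ← hn]
    exact (Subgroup.card_le_card_group H).lt_of_ne (mt (Subgroup.card_eq_iff_eq_top H).1 hH)
  obtain ⟨k, rfl⟩ := Nat.exists_eq_add_one.2 (pos_of_gt hmn)
  obtain ⟨K, hK, hHK⟩ := Sylow.exists_subgroup_card_pow_prime_le p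
    (hn ▸ pow_dvd_pow p k.le_succ) H hm (Nat.le_of_lt_succ hmn)
  refine ⟨K, hHK, ?_⟩
  have hmul := K.card_mul_index
  rw [hK, hn, pow_succ] at hmul
  exact Nat.eq_of_mul_eq_mul_left (pow_pos hp.pos k) hmul

theorem lt_ncard_index_eq_of_not_isCyclic (hG : IsPGroup p G) (hnc : ¬ IsCyclic G) :
    p < {H : Subgroup G | H.index = p}.ncard := by
  refine lt_ncard_of_cover_of_index_eq (Set.toFinite _) (Fact.out : p.Prime).one_lt
    (fun H hH ↦ hH) fun x ↦ ?_
  have hx : Subgroup.zpowers x ≠ ⊤ := fun h ↦ hnc (isCyclic_iff_exists_zpowers_eq_top.2 ⟨x, h⟩)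
  obtain ⟨H, hxH, hH⟩ := exists_le_index_eq_of_isPGroup hG hx
  exact ⟨H, hH, Subgroup.zpowers_le.1 hxH⟩

theorem natCard_subgroup_add_le_of_index_eq (hG : IsPGroup p G) (hnc : ¬ IsCyclic G)
    {M : Subgroup G} (hM : M.index = p) :
    Nat.card (Subgroup M) + (p + 1) ≤ Nat.card (Subgroup G) := by
  let C := {H : Subgroup G | H.index = p}
  have hcoatom : ∀ H ∈ C, IsCoatom H := fun H hH ↦
    isCoatom_of_index_prime (hH.symm ▸ (Fact.out : p.Prime))
  have hdisj : Disjoint (Set.Iic M) (insert ⊤ (C \ {M})) := by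
    rw [Set.disjoint_right]
    rintro H (rfl | ⟨hHC, hHM⟩) hle
    · exact (hcoatom M hM).1 (top_le_iff.1 hle)
    · exact (hcoatom M hM).1 ((hcoatom H hHC).2 M (lt_of_le_of_ne hle hHM))
  calc Nat.card (Subgroup M) + (p + 1)
      ≤ (Set.Iic M).ncard + C.ncard := by
        rw [natCard_subgroup_eq_ncard_Iic]
        exact Nat.add_le_add_left (lt_ncard_index_eq_of_not_isCyclic hG hnc) _
    _ = (Set.Iic M).ncard + (insert ⊤ (C \ {M})).ncard := by
        rw [Set.ncard_exchange (fun htop ↦ (hcoatom ⊤ htop).1 rfl) hM]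
    _ = (Set.Iic M ∪ insert ⊤ (C \ {M})).ncard := (Set.ncard_union_eq hdisj).symm
    _ ≤ Nat.card (Subgroup G) := Set.ncard_le_card _

theorem exists_index_eq_not_isCyclic_of_odd (hG : IsPGroup p G) (hnc : ¬ IsCyclic G) (hodd : Odd p)
    (hcard : p ^ 2 < Nat.card G) : ∃ M : Subgroup G, M.index = p ∧ ¬ IsCyclic M := by
  by_contra! hcyc
  have hp : p.Prime := Fact.out
  obtain ⟨H, K, hH, hK, hne⟩ := (Set.one_lt_ncard_iff (Set.toFinite _)).1
    (hp.one_lt.trans (lt_ncard_index_eq_of_not_isCyclic hG hnc))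
  have hHcoatom : IsCoatom H := isCoatom_of_index_prime (hH.symm ▸ hp)
  have hKcoatom : IsCoatom K := isCoatom_of_index_prime (hK.symm ▸ hp)
  have hsup : H ⊔ K = ⊤ := hHcoatom.sup_eq_top_of_ne hKcoatom hne
  have := hcyc H hH
  have := hcyc K hK
  have := normal_of_isPGroup_of_index_eq hG hH
  have := normal_of_isPGroup_of_index_eq hG hK
  have hpow (x : G) : x ^ p ∈ H ⊓ K := ⟨hH ▸ H.pow_index_mem x, hK ▸ K.pow_index_mem x⟩
  let f : G →* G := MonoidHom.mk' (· ^ p) (mul_pow_of_odd_of_sup_eq_top hsup hodd hpow)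
  have hrange : f.range ≤ H ⊓ K := by
    rintro _ ⟨x, rfl⟩
    exact hpow x
  have hlt : p < Nat.card f.ker := by
    calc p = K.index := hK.symm
      _ < (H ⊓ K).index := Subgroup.index_strictAnti <|
        inf_lt_right.2 fun hKH ↦ hne ((hKcoatom.le_iff_eq hHcoatom.1).1 hKH)
      _ ≤ f.range.index := Subgroup.index_antitone hrange
      _ = Nat.card f.ker := Subgroup.index_range
  have hle (L : Subgroup G) (hL : L ≤ f.ker) [IsCyclic L] : Nat.card L ≤ p :=
    Nat.le_of_dvd hp.pos <| natCard_dvd_of_isCyclic_of_forall_pow_eq_one fun x ↦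
      Subtype.ext (hL x.2)
  have hker : f.ker ≠ ⊤ := by
    intro htop
    have hHp := hle H (htop ▸ le_top)
    rw [← H.card_mul_index, hH, sq] at hcard
    exact hcard.not_ge (Nat.mul_le_mul_right p hHp)
  obtain ⟨M, hkerM, hM⟩ := exists_le_index_eq_of_isPGroup hG hker
  have := hcyc M hM
  have := Subgroup.isCyclic_of_le hkerM
  exact hlt.not_ge (hle f.ker le_rfl)

end PGroup

theorem odd_noncyclic_pGroup_total_subgroups_lower_bound
    (p lam : ℕ) (hp : p.Prime) (hodd : Odd p) (hlam : 2 ≤ lam)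
    (G : Type*) [Group G] (hcard : Nat.card G = p ^ lam)
    (hnc : ¬ IsCyclic G) :
    (p + 1) * (lam - 1) + 2 ≤ Nat.card (Subgroup G) := by
  have := Fact.mk hp
  have : Finite G := Nat.finite_of_card_ne_zero (hcard ▸ (pow_pos hp.pos _).ne')
  have hG : IsPGroup p G := .of_card hcard
  induction lam, hlam using Nat.le_induction generalizing G with
  | base =>
    obtain ⟨M, hM⟩ : ∃ M : Subgroup G, M.index = p :=
      Set.nonempty_of_ncard_ne_zero (pos_of_gt (lt_ncard_index_eq_of_not_isCyclic hG hnc)).ne'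
    have hMcard : Nat.card M = p ^ 1 := natCard_eq_pow_of_index_eq hp.pos hcard hM
    have : Nontrivial M := Finite.one_lt_card_iff_nontrivial.1 (by simpa [hMcard] using hp.one_lt)
    have hM_two : 1 < Nat.card (Subgroup M) := Finite.one_lt_card
    have hstep := natCard_subgroup_add_le_of_index_eq hG hnc hM
    omega
  | succ n hn ih =>
    have hlt : p ^ 2 < Nat.card G := hcard ▸ Nat.pow_lt_pow_right hp.one_lt (Nat.lt_succ_of_le hn)
    obtain ⟨M, hM, hMnc⟩ := exists_index_eq_not_isCyclic_of_odd hG hnc hodd hlt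
    have hMcard : Nat.card M = p ^ n := natCard_eq_pow_of_index_eq hp.pos hcard hM
    calc (p + 1) * (n + 1 - 1) + 2
        = (p + 1) * (n - 1) + 2 + (p + 1) := by
          rw [show n + 1 - 1 = n - 1 + 1 by omega]
          ring
      _ ≤ Nat.card (Subgroup M) + (p + 1) :=
          Nat.add_le_add_right (ih M hMcard hMnc inferInstance (hG.to_subgroup M)) _
      _ ≤ Nat.card (Subgroup G) := natCard_subgroup_add_le_of_index_eq hG hnc hM
end

section
/- A non-cyclic 2-group of order 2^λ (λ ≥ 2) that is not generalized quaternion has at least 3 subgroups of order 2^k for every 1 ≤ k ≤ λ−1. -/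
/-!
If `G` has fewer than three subgroups of order `2 ^ k`, then every subgroup of order `2 ^ (k + 1)`
is cyclic, because a noncyclic `2`-group has two maximal subgroups `A ≠ B`, and the elements lying
in both or in neither of them form a third. Hence every subgroup of order `2 ^ k` is cyclic and
contains a single involution, so that `G` has fewer than three involutions; multiplying by a central
involution shows that it has exactly one.

A `2`-group with a single involution is cyclic or generalized quaternion: a maximal abelian normal
subgroup is cyclic, say generated by `a`, and is its own centralizer. An element `y` outside it with
`y ^ 2` inside acts by `a ↦ a⁻¹`, since otherwise some `a ^ j * y` would be a second involution. As
inversion is not the square of an automorphism of a cyclic `2`-group of order at least four, `⟨a⟩`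
has index two, and `a`, `y` satisfy the relations of the quaternion group.
-/

section Subgroups

variable {G : Type*} [Group G]

lemma exists_index_eq_two_of_ne {A B : Subgroup G} (hA : A.index = 2) (hB : B.index = 2)
    (hAB : A ≠ B) : ∃ C : Subgroup G, C.index = 2 ∧ C ≠ A ∧ C ≠ B := by
  have not_le {A B : Subgroup G} (hA : A.index = 2) (hB : B.index = 2) (hAB : A ≠ B) :
      ¬ A ≤ B := fun hle ↦ by
    have hrel := Subgroup.relIndex_mul_index hle
    rw [hA, hB] at hrel
    exact hAB (hle.antisymm (Subgroup.relIndex_eq_one.1 (by lia)))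
  obtain ⟨a, haA, haB⟩ := SetLike.not_le_iff_exists.1 (not_le hA hB hAB)
  obtain ⟨b, hbB, hbA⟩ := SetLike.not_le_iff_exists.1 (not_le hB hA hAB.symm)
  let C : Subgroup G :=
    { carrier := {x | x ∈ A ↔ x ∈ B}
      one_mem' := by simp [one_mem]
      mul_mem' := fun {x y} (hx : x ∈ A ↔ x ∈ B) (hy : y ∈ A ↔ y ∈ B) ↦ by
        simp only [Set.mem_ofPred_eq, Subgroup.mul_mem_iff_of_index_two hA,
          Subgroup.mul_mem_iff_of_index_two hB, hx, hy]
      inv_mem' := by simp }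
  have mem_C (x : G) : x ∈ C ↔ (x ∈ A ↔ x ∈ B) := Iff.rfl
  refine ⟨C, Subgroup.index_eq_two_iff_exists_notMem_and.2 ⟨a, ?_, fun x ↦ ?_⟩, ?_, ?_⟩
  · simp [mem_C, haA, haB]
  · simp only [mem_C, Subgroup.mul_mem_iff_of_index_two hA, Subgroup.mul_mem_iff_of_index_two hB]
    tauto
  · exact fun h ↦ by simpa [h, haA, haB] using mem_C a
  · exact fun h ↦ by simpa [h, hbA, hbB] using mem_C b

lemma ncard_subgroups_le_of_subgroup [Finite G] (L : Subgroup G) (m : ℕ) :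
    {K : Subgroup L | Nat.card K = m}.ncard ≤ {H : Subgroup G | Nat.card H = m}.ncard :=
  Set.ncard_le_ncard_of_injOn (Subgroup.map L.subtype)
    (fun K (hK : Nat.card K = m) ↦
      (Subgroup.card_map_of_injective L.subtype_injective).trans hK)
    (Subgroup.map_injective L.subtype_injective).injOn

lemma isCyclic_of_unique_subgroup_card_pow {p k : ℕ} [Fact p.Prime]
    (hcard : Nat.card G = p ^ (k + 1))
    (huniq : ∀ H K : Subgroup G, Nat.card H = p ^ k → Nat.card K = p ^ k → H = K) :
    IsCyclic G := by
  have hp : p.Prime := Fact.out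
  have : Finite G := Nat.finite_of_card_ne_zero (hcard ▸ (pow_pos hp.pos _).ne')
  have hdvd : p ^ k ∣ Nat.card G := hcard ▸ pow_dvd_pow p k.le_succ
  obtain ⟨H, hH⟩ := Sylow.exists_subgroup_card_pow_prime p hdvd
  have hHtop : H ≠ ⊤ := by
    rintro rfl
    rw [Subgroup.card_top, hcard] at hH
    exact k.succ_ne_self (Nat.pow_right_injective hp.two_le hH)
  obtain ⟨x, -, hx⟩ := SetLike.exists_of_lt hHtop.lt_top
  obtain ⟨j, hj, hxj⟩ := (Nat.dvd_prime_pow hp).1 (hcard ▸ orderOf_dvd_natCard x)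
  have hkj : k < j := by
    by_contra! hjk
    obtain ⟨K, hK, hxK⟩ := Sylow.exists_subgroup_card_pow_prime_le p hdvd (Subgroup.zpowers x)
      (by rw [Nat.card_zpowers, hxj]) hjk
    exact hx (huniq K H hK hH ▸ Subgroup.zpowers_le.1 hxK)
  exact isCyclic_of_orderOf_eq_card x (by rw [hxj, hcard, hj.antisymm hkj])

lemma three_le_ncard_subgroups_of_not_isCyclic {k : ℕ} (hcard : Nat.card G = 2 ^ (k + 1))
    (hG : ¬ IsCyclic G) : 3 ≤ {H : Subgroup G | Nat.card H = 2 ^ k}.ncard := by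
  have : Finite G := Nat.finite_of_card_ne_zero (hcard ▸ (by positivity))
  have index_eq_two_iff (H : Subgroup G) : H.index = 2 ↔ Nat.card H = 2 ^ k := by
    have hmul := H.card_mul_index
    rw [hcard, pow_succ] at hmul
    refine ⟨fun h ↦ ?_, fun h ↦ ?_⟩
    · exact Nat.eq_of_mul_eq_mul_right two_pos (h ▸ hmul)
    · exact Nat.eq_of_mul_eq_mul_left (by positivity) (h ▸ hmul)
  obtain ⟨A, B, hA, hB, hAB⟩ : ∃ A B : Subgroup G, A.index = 2 ∧ B.index = 2 ∧ A ≠ B := by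
    by_contra! huniq
    simp only [index_eq_two_iff] at huniq
    exact hG (isCyclic_of_unique_subgroup_card_pow hcard huniq)
  obtain ⟨C, hC, hCA, hCB⟩ := exists_index_eq_two_of_ne hA hB hAB
  simp only [index_eq_two_iff] at hA hB hC
  exact (Set.two_lt_ncard (Set.toFinite _)).2 ⟨A, hA, B, hB, C, hC, hAB, hCA.symm, hCB.symm⟩

lemma isCyclic_of_ncard_subgroups_lt_three [Finite G] {k : ℕ} (hdvd : 2 ^ (k + 1) ∣ Nat.card G)
    (hlt : {H : Subgroup G | Nat.card H = 2 ^ k}.ncard < 3) {H : Subgroup G}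
    (hH : Nat.card H = 2 ^ k) : IsCyclic H := by
  obtain ⟨L, hL, hHL⟩ := Sylow.exists_subgroup_card_pow_succ hdvd hH
  have : IsCyclic L := by
    by_contra hcyc
    exact hlt.not_ge ((three_le_ncard_subgroups_of_not_isCyclic hL hcyc).trans
      (ncard_subgroups_le_of_subgroup L _))
  exact Subgroup.isCyclic_of_le hHL

end Subgroups

section Involutions

lemma eq_of_orderOf_eq_two_of_isCyclic {G : Type*} [Group G] [Finite G] [IsCyclic G] {x y : G}
    (hx : orderOf x = 2) (hy : orderOf y = 2) : x = y := by
  classical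
  have := Fintype.ofFinite G
  have hcard : (Finset.univ.filter fun g : G ↦ orderOf g = 2).card ≤ 1 := by
    rw [IsCyclic.card_orderOf_eq_totient (hx ▸ orderOf_dvd_card), Nat.totient_two]
  exact Finset.card_le_one.1 hcard x (by simp [hx]) y (by simp [hy])

variable {G : Type*} [Group G] [Finite G]

lemma ncard_involutions_le_ncard_subgroups {k : ℕ} (hk : 1 ≤ k) (hdvd : 2 ^ k ∣ Nat.card G)
    (hcyc : ∀ H : Subgroup G, Nat.card H = 2 ^ k → IsCyclic H) :
    {x : G | orderOf x = 2}.ncard ≤ {H : Subgroup G | Nat.card H = 2 ^ k}.ncard := by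
  have exists_mem (x : G) (hx : orderOf x = 2) : ∃ H : Subgroup G, Nat.card H = 2 ^ k ∧ x ∈ H := by
    obtain ⟨H, hH, hxH⟩ := Sylow.exists_subgroup_card_pow_prime_le 2 hdvd (Subgroup.zpowers x)
      (n := 1) (by rw [Nat.card_zpowers, hx, pow_one]) hk
    exact ⟨H, hH, Subgroup.zpowers_le.1 hxH⟩
  choose! f hcard hmem using exists_mem
  refine Set.ncard_le_ncard_of_injOn f hcard fun x hx y hy hxy ↦ ?_
  have := hcyc (f y) (hcard y hy)
  exact congrArg Subtype.val <| eq_of_orderOf_eq_two_of_isCyclic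
    (x := (⟨x, hxy ▸ hmem x hx⟩ : f y)) (y := ⟨y, hmem y hy⟩)
    ((Subgroup.orderOf_mk _ _).trans hx) ((Subgroup.orderOf_mk _ _).trans hy)

/-- `z` is the only involution (element of order two) of its group. -/
def IsUniqueInvolution {G : Type*} [Group G] (z : G) : Prop :=
  ∀ x : G, orderOf x = 2 ↔ x = z

lemma exists_isUniqueInvolution [Nontrivial G] (hG : IsPGroup 2 G)
    (hlt : {x : G | orderOf x = 2}.ncard < 3) : ∃ z : G, IsUniqueInvolution z := by
  have := hG.center_nontrivial
  have hdvd : 2 ∣ Nat.card (Subgroup.center G) :=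
    (hG.to_subgroup _).card_eq_or_dvd.resolve_left Finite.one_lt_card.ne'
  obtain ⟨⟨z, hzc⟩, hz⟩ := exists_prime_orderOf_dvd_card' 2 hdvd
  rw [Subgroup.orderOf_mk] at hz
  refine ⟨z, fun t ↦ ⟨fun ht ↦ ?_, fun h ↦ h ▸ hz⟩⟩
  by_contra htz
  obtain ⟨hz2, hz1⟩ := orderOf_eq_prime_iff.1 hz
  obtain ⟨ht2, ht1⟩ := orderOf_eq_prime_iff.1 ht
  have hcomm : Commute t z := Subgroup.mem_center_iff.1 hzc t
  have htz_ne : t * z ≠ 1 := fun h ↦ htz <|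
    (eq_inv_of_mul_eq_one_left h).trans (inv_eq_of_mul_eq_one_left (by rwa [← sq]))
  have htz_order : orderOf (t * z) = 2 :=
    orderOf_eq_prime (by rw [hcomm.mul_pow, ht2, hz2, one_mul]) htz_ne
  exact hlt.not_ge <| (Set.two_lt_ncard (Set.toFinite _)).2
    ⟨z, hz, t, ht, t * z, htz_order, Ne.symm htz, by simpa using ht1, by simpa using hz1⟩

end Involutions

section MaximalAbelianNormal

variable {G : Type*} [Group G] {p : ℕ} [Fact p.Prime]

lemma exists_mem_inf_center_ne_one (hG : IsPGroup p G) {N : Subgroup G} [Finite N] [N.Normal]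
    (hN : N ≠ ⊥) : ∃ x ∈ N ⊓ Subgroup.center G, x ≠ 1 := by
  have hdvd : p ∣ Nat.card N :=
    (hG.to_subgroup N).card_eq_or_dvd.resolve_left (mt Subgroup.card_eq_one.1 hN)
  obtain ⟨x, hx, hx1⟩ := (hG.of_equiv ConjAct.toConjAct)
    |>.exists_fixed_point_of_prime_dvd_card_of_fixed_point N hdvd (a := 1) fun g ↦ smul_one g
  refine ⟨x, ⟨x.2, Subgroup.mem_center_iff.2 fun g ↦ ?_⟩, fun h ↦ hx1 (Subtype.ext h.symm)⟩
  have hfix := congrArg Subtype.val (hx (ConjAct.toConjAct g))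
  exact mul_inv_eq_iff_eq_mul.1 hfix

lemma normal_of_le_center {H : Subgroup G} (hH : H ≤ Subgroup.center G) : H.Normal :=
  ⟨fun x hx g ↦ by rwa [Subgroup.mem_center_iff.1 (hH hx) g, mul_inv_cancel_right]⟩

lemma exists_normal_centralizer_eq_self [Finite G] (hG : IsPGroup p G) :
    ∃ A : Subgroup G, A.Normal ∧ Subgroup.centralizer A = A := by
  obtain ⟨A, -, ⟨hAN, hAA⟩, hmax⟩ := Finite.exists_le_maximal
    (p := fun A : Subgroup G ↦ A.Normal ∧ A ≤ Subgroup.centralizer A) (a := ⊥)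
    ⟨inferInstance, bot_le⟩
  refine ⟨A, hAN, hAA.antisymm' ?_⟩
  by_contra hC
  have : ((Subgroup.centralizer (A : Set G)).map (QuotientGroup.mk' A)).Normal :=
    Subgroup.Normal.map inferInstance _ (QuotientGroup.mk'_surjective A)
  obtain ⟨_, ⟨⟨y, hyC, rfl⟩, hyZ⟩, hy1⟩ := exists_mem_inf_center_ne_one (hG.to_quotient A)
    (N := (Subgroup.centralizer (A : Set G)).map (QuotientGroup.mk' A))
    (by rwa [ne_eq, Subgroup.map_eq_bot_iff, QuotientGroup.ker_mk'])
  have hnormal : (A ⊔ Subgroup.zpowers y).Normal := by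
    have := normal_of_le_center (Subgroup.zpowers_le.2 hyZ)
    rw [← MonoidHom.map_zpowers] at this
    rw [← QuotientGroup.ker_mk' A, sup_comm, ← Subgroup.comap_map_eq]
    exact this.comap _
  have hyA : Subgroup.zpowers y ≤ Subgroup.centralizer A := Subgroup.zpowers_le.2 hyC
  have habelian : A ⊔ Subgroup.zpowers y ≤ Subgroup.centralizer (A ⊔ Subgroup.zpowers y :) :=
    sup_le (Subgroup.le_centralizer_iff.1 (sup_le hAA hyA)) <| Subgroup.le_centralizer_iff.1 <|
      sup_le (Subgroup.le_centralizer_iff.1 hyA) (Subgroup.le_centralizer _)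
  have hle := hmax ⟨hnormal, habelian⟩ le_sup_left
  exact hy1 ((QuotientGroup.eq_one_iff y).2 (hle (Subgroup.mem_sup_right
    (Subgroup.mem_zpowers y))))

lemma isCyclic_of_card_ker_powMonoidHom_le {A : Type*} [CommGroup A] [Finite A]
    (hA : IsPGroup p A) (hker : Nat.card (powMonoidHom p : A →* A).ker ≤ p) : IsCyclic A := by
  have hp : p.Prime := Fact.out
  obtain ⟨n, hn⟩ := IsPGroup.iff_card.1 hA
  obtain _ | k := n
  · have := (Nat.card_eq_one_iff_unique.1 hn).1
    infer_instance
  -- Every subgroup of index `p` contains all `p`-th powers, which form a subgroup of index at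
  -- most `p`.
  have eq_range (M : Subgroup A) (hM : Nat.card M = p ^ k) : M = (powMonoidHom p).range := by
    have hindex : M.index = p := by
      have := M.card_mul_index
      rw [hM, hn, pow_succ] at this
      exact Nat.eq_of_mul_eq_mul_left (pow_pos hp.pos k) this
    refine (Subgroup.eq_of_le_of_card_ge ?_ ?_).symm
    · rintro _ ⟨x, rfl⟩
      simpa [hindex] using M.pow_index_mem x
    · have hmul := (powMonoidHom p : A →* A).range.card_mul_index
      rw [Subgroup.index_range, hn, pow_succ] at hmul
      rw [hM]
      exact Nat.le_of_mul_le_mul_right (hmul ▸ Nat.mul_le_mul_left _ hker) hp.pos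
  exact isCyclic_of_unique_subgroup_card_pow hn fun H K hH hK ↦
    (eq_range H hH).trans (eq_range K hK).symm

end MaximalAbelianNormal

section CyclicNormalSubgroup

open Subgroup

variable {G : Type*} [Group G] {a y : G}

lemma conj_eq_pow_of_mem_zpowers {r : ℕ} (hr : y * a * y⁻¹ = a ^ r) {x : G}
    (hx : x ∈ zpowers a) : y * x * y⁻¹ = x ^ r := by
  obtain ⟨i, rfl⟩ := hx
  rw [← conj_zpow, hr, ← zpow_natCast, ← zpow_natCast, zpow_comm]

lemma mul_sq_eq_pow_succ_mul_sq {r : ℕ} (hr : y * a * y⁻¹ = a ^ r) {x : G}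
    (hx : x ∈ zpowers a) : (x * y) ^ 2 = x ^ (r + 1) * y ^ 2 :=
  calc (x * y) ^ 2 = x * (y * x * y⁻¹) * y ^ 2 := by simp only [sq]; group
    _ = x ^ (r + 1) * y ^ 2 := by rw [conj_eq_pow_of_mem_zpowers hr hx, pow_succ' x]

lemma exists_conj_eq_pow (ha : IsOfFinOrder a) (hN : (zpowers a).Normal) (y : G) :
    ∃ r : ℕ, y * a * y⁻¹ = a ^ r := by
  obtain ⟨r, hr⟩ := ha.mem_powers_iff_mem_zpowers.2 (hN.conj_mem a (mem_zpowers a) y)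
  exact ⟨r, hr.symm⟩

lemma mem_zpowers_pow_of_coprime {p n : ℕ} (hG : IsPGroup p G) (hn : p.Coprime n) (x : G) :
    x ∈ zpowers (x ^ n) :=
  mem_zpowers_pow_iff.2 (hG.orderOf_coprime hn x).symm

lemma eq_one_of_pow_eq_one_of_coprime {p n : ℕ} (hG : IsPGroup p G) (hn : p.Coprime n) {x : G}
    (hx : x ^ n = 1) : x = 1 := by
  simpa [hx] using mem_zpowers_pow_of_coprime hG hn x

/-- If `h ^ 2` inverts `a` and `h` maps `a` to `a ^ r`, then `a ^ (r ^ 2 + 1) = 1`, and `r ^ 2 + 1`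
is not divisible by four. -/
lemma sq_eq_one_of_sq_conj_eq_inv (hG : IsPGroup 2 G) (hN : (zpowers a).Normal) {h : G}
    (hinv : h ^ 2 * a * (h ^ 2)⁻¹ = a⁻¹) : a ^ 2 = 1 := by
  obtain ⟨r, hr⟩ := exists_conj_eq_pow (hG.isOfFinOrder two_ne_zero a) hN h
  have hpow : a ^ (r ^ 2 + 1) = 1 :=
    calc a ^ (r ^ 2 + 1) = h * (h * a * h⁻¹) * h⁻¹ * a := by
          rw [hr, conj_eq_pow_of_mem_zpowers hr (npow_mem_zpowers a r), ← pow_mul, ← pow_succ, sq]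
      _ = h ^ 2 * a * (h ^ 2)⁻¹ * a := by simp only [sq]; group
      _ = 1 := by rw [hinv, inv_mul_cancel]
  obtain ⟨q, rfl | rfl⟩ := r.even_or_odd'
  · rw [eq_one_of_pow_eq_one_of_coprime hG (Nat.coprime_two_left.2 ⟨2 * q ^ 2, by ring⟩) hpow,
      one_pow]
  · refine eq_one_of_pow_eq_one_of_coprime hG (Nat.coprime_two_left.2 ⟨q ^ 2 + q, rfl⟩) ?_
    rw [← hpow, ← pow_mul]
    ring_nf

lemma sq_sq_eq_one_of_conj_eq_pow {q : ℕ} (hG : IsPGroup 2 G) (hr : y * a * y⁻¹ = a ^ (4 * q + 3))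
    (hy : y ^ 2 ∈ zpowers a) : (y ^ 2) ^ 2 = 1 := by
  have hself : (y ^ 2) ^ (4 * q + 3) = y ^ 2 := by
    rw [← conj_eq_pow_of_mem_zpowers hr hy]
    group
  refine eq_one_of_pow_eq_one_of_coprime hG (odd_two_mul_add_one q).coprime_two_left ?_
  calc ((y ^ 2) ^ 2) ^ (2 * q + 1) = (y ^ 2) ^ (4 * q + 3) * (y ^ 2)⁻¹ := by
        rw [eq_mul_inv_iff_mul_eq, ← pow_mul, ← pow_succ]
        congr 1
        ring
    _ = 1 := by rw [hself, mul_inv_cancel]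

lemma mem_zpowers_of_conj_eq_self (hC : centralizer (zpowers a : Set G) ≤ zpowers a)
    (h : y * a * y⁻¹ = a) : y ∈ zpowers a := by
  refine hC (mem_centralizer_iff.2 ?_)
  rintro _ ⟨i, rfl⟩
  exact (Commute.zpow_left (mul_inv_eq_iff_eq_mul.1 h).symm i)

lemma zpowers_ne_bot_of_notMem (hC : centralizer (zpowers a : Set G) ≤ zpowers a)
    (hy : y ∉ zpowers a) : zpowers a ≠ ⊥ := by
  rw [ne_eq, zpowers_eq_bot]
  rintro rfl
  exact hy (mem_zpowers_of_conj_eq_self hC (by simp))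

lemma mem_zpowers_of_mem_zpowers_sq (hC : centralizer (zpowers a : Set G) ≤ zpowers a)
    (h : a ∈ zpowers (y ^ 2)) : y ∈ zpowers a := by
  obtain ⟨i, hi⟩ := h
  have hcomm : Commute y a := hi ▸ ((Commute.refl y).pow_right 2).zpow_right i
  exact mem_zpowers_of_conj_eq_self hC (mul_inv_eq_iff_eq_mul.2 hcomm)

end CyclicNormalSubgroup

section QuaternionGroup

open Subgroup

variable {G : Type*} [Group G] {N : ℕ} {a y : G}

/-- The homomorphism from the generalized quaternion group of order `4 * N` determined by elements
`a` and `y` satisfying its defining relations; it sends `a i` to `a ^ i` and `xa i` to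
`y * a ^ i`. -/
def quaternionGroupLift (ha : a ^ (2 * N) = 1) (hy : y ^ 2 = a ^ N) (hya : y * a * y⁻¹ = a⁻¹) :
    QuaternionGroup N →* G :=
  let e : ZMod (2 * N) →+ Additive G :=
    ZMod.lift (2 * N) ⟨zmultiplesHom (Additive G) (Additive.ofMul a), by
      rw [zmultiplesHom_apply, ← ofMul_zpow, zpow_natCast, ha, ofMul_one]⟩
  have he (k : ℤ) : (e k).toMul = a ^ k := by simp [e, ZMod.lift_coe]
  have hyz (k : ℤ) : a ^ k * y = y * a ^ (-k) := by
    have hconj : y * a ^ (-k) * y⁻¹ = a ^ k := by rw [← conj_zpow, hya, inv_zpow', neg_neg]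
    exact (mul_inv_eq_iff_eq_mul.1 hconj).symm
  MonoidHom.mk' (fun
    | .a i => (e i).toMul
    | .xa i => y * (e i).toMul) (by
      rintro (i | i) (j | j) <;>
      obtain ⟨i, rfl⟩ := ZMod.intCast_surjective i <;>
      obtain ⟨j, rfl⟩ := ZMod.intCast_surjective j
      · simp only [QuaternionGroup.a_mul_a, ← Int.cast_add, he, zpow_add]
      · simp only [QuaternionGroup.a_mul_xa, ← Int.cast_sub, he]
        rw [← mul_assoc, hyz, mul_assoc, ← zpow_add, neg_add_eq_sub]
      · simp only [QuaternionGroup.xa_mul_a, ← Int.cast_add, he, zpow_add, mul_assoc]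
      · have hcast : ((N : ZMod (2 * N)) + (j : ZMod (2 * N)) - (i : ZMod (2 * N))) =
            ((N + j - i : ℤ) : ZMod (2 * N)) := by push_cast; rfl
        simp only [QuaternionGroup.xa_mul_xa, hcast, he]
        rw [mul_assoc, ← mul_assoc _ y, hyz, ← mul_assoc, ← mul_assoc, ← sq, hy, mul_assoc,
          ← zpow_add, ← zpow_natCast, ← zpow_add]
        congr 1
        ring)

lemma quaternionGroupLift_a (ha : a ^ (2 * N) = 1) (hy : y ^ 2 = a ^ N)
    (hya : y * a * y⁻¹ = a⁻¹) (i : ℤ) : quaternionGroupLift ha hy hya (.a i) = a ^ i := by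
  simp [quaternionGroupLift, ZMod.lift_coe]

lemma quaternionGroupLift_xa (ha : a ^ (2 * N) = 1) (hy : y ^ 2 = a ^ N)
    (hya : y * a * y⁻¹ = a⁻¹) (i : ℤ) : quaternionGroupLift ha hy hya (.xa i) = y * a ^ i := by
  simp [quaternionGroupLift, ZMod.lift_coe]

lemma quaternionGroupLift_surjective (ha : a ^ (2 * N) = 1) (hy : y ^ 2 = a ^ N)
    (hya : y * a * y⁻¹ = a⁻¹) (hgen : closure {a, y} = ⊤) :
    Function.Surjective (quaternionGroupLift ha hy hya) := by
  rw [← MonoidHom.range_eq_top, eq_top_iff, ← hgen, closure_le, Set.pair_subset_iff]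
  exact ⟨⟨.a 1, by simpa using quaternionGroupLift_a ha hy hya 1⟩,
    ⟨.xa 0, by simpa using quaternionGroupLift_xa ha hy hya 0⟩⟩

lemma nonempty_mulEquiv_quaternionGroup_of_closure_eq_top [NeZero N] (hcard : Nat.card G = 4 * N)
    (ha : a ^ (2 * N) = 1) (hy : y ^ 2 = a ^ N) (hya : y * a * y⁻¹ = a⁻¹)
    (hgen : closure {a, y} = ⊤) : Nonempty (G ≃* QuaternionGroup N) := by
  have hbij : Function.Bijective (quaternionGroupLift ha hy hya) :=
    (quaternionGroupLift_surjective ha hy hya hgen).bijective_of_nat_card_le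
      (by rw [Nat.card_eq_fintype_card, QuaternionGroup.card, hcard])
  exact ⟨(MulEquiv.ofBijective _ hbij).symm⟩

end QuaternionGroup

namespace IsUniqueInvolution

open Subgroup

variable {G : Type*} [Group G] {a y z : G}

lemma mem_of_ne_bot (hz : IsUniqueInvolution z) (hG : IsPGroup 2 G) {H : Subgroup G}
    (hH : H ≠ ⊥) : z ∈ H := by
  obtain ⟨x, hxH, hx⟩ := H.bot_or_exists_ne_one.resolve_left hH
  rw [← (hz _).1 (orderOf_pow_orderOf_div (hG.isOfFinOrder two_ne_zero x).orderOf_pos.ne'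
    (hG.dvd_orderOf hx))]
  exact pow_mem hxH _

lemma mem_of_sq_eq_one (hz : IsUniqueInvolution z) (hG : IsPGroup 2 G) {H : Subgroup G}
    (hH : H ≠ ⊥) {x : G} (hx : x ^ 2 = 1) : x ∈ H := by
  by_cases hx1 : x = 1
  · exact hx1 ▸ one_mem H
  · exact (hz x).1 (orderOf_eq_prime hx hx1) ▸ hz.mem_of_ne_bot hG hH

open scoped IsMulCommutative in
lemma isCyclic_of_isMulCommutative (hz : IsUniqueInvolution z) (hG : IsPGroup 2 G)
    (A : Subgroup G) [Finite A] [IsMulCommutative A] : IsCyclic A := by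
  refine isCyclic_of_card_ker_powMonoidHom_le (hG.to_subgroup A) ?_
  have hsub : Subtype.val '' ((powMonoidHom 2 : A →* A).ker : Set A) ⊆ {1, z} := by
    rintro _ ⟨x, hx, rfl⟩
    by_cases hx1 : x = 1
    · simp [hx1]
    · exact .inr ((hz x).1 ((orderOf_coe x).trans (orderOf_eq_prime hx hx1)))
  calc Nat.card (powMonoidHom 2 : A →* A).ker
      = (Subtype.val '' ((powMonoidHom 2 : A →* A).ker : Set A)).ncard :=
        (Set.ncard_image_of_injective _ Subtype.val_injective).symm
    _ ≤ ({1, z} : Set G).ncard := Set.ncard_le_ncard hsub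
    _ ≤ 2 := by simpa using Set.ncard_insert_le (1 : G) {z}

lemma pow_eq_of_orderOf_eq (hz : IsUniqueInvolution z) {N : ℕ} [NeZero N]
    (ha : orderOf a = 2 * N) : a ^ N = z := by
  refine (hz _).1 ?_
  rw [orderOf_pow_of_dvd (NeZero.ne N) (ha ▸ dvd_mul_left N 2), ha,
    Nat.mul_div_cancel _ (NeZero.pos N)]

section CyclicSelfCentralizing

variable (hz : IsUniqueInvolution z) (hG : IsPGroup 2 G)
  (hC : centralizer (zpowers a : Set G) ≤ zpowers a)

include hz hG hC

lemma sq_notMem_zpowers_pow_succ (hy : y ∉ zpowers a) {r : ℕ} (hr : y * a * y⁻¹ = a ^ r) :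
    y ^ 2 ∉ zpowers (a ^ (r + 1)) := by
  rintro ⟨i, hi : (a ^ (r + 1)) ^ i = y ^ 2⟩
  have hmem : a ^ (-i) ∈ zpowers a := zpow_mem_zpowers a (-i)
  have hsq : (a ^ (-i) * y) ^ 2 = 1 := by
    rw [mul_sq_eq_pow_succ_mul_sq hr hmem, ← hi, ← zpow_natCast, ← zpow_natCast, zpow_comm,
      ← zpow_add, neg_add_cancel, zpow_zero]
  exact hy ((Subgroup.mul_mem_cancel_left _ hmem).1
    (hz.mem_of_sq_eq_one hG (zpowers_ne_bot_of_notMem hC hy) hsq))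

variable (hN : (zpowers a).Normal)

include hN

lemma conj_eq_inv_of_sq_mem (hy : y ∉ zpowers a) (hy2 : y ^ 2 ∈ zpowers a) :
    y * a * y⁻¹ = a⁻¹ := by
  obtain ⟨r, hr⟩ := exists_conj_eq_pow (hG.isOfFinOrder two_ne_zero a) hN y
  have hnotMem := hz.sq_notMem_zpowers_pow_succ hG hC hy hr
  obtain ⟨q, rfl | rfl | rfl⟩ : ∃ q, r = 2 * q ∨ r = 4 * q + 1 ∨ r = 4 * q + 3 := by
    obtain ⟨q, rfl | rfl⟩ := r.even_or_odd'
    · exact ⟨q, .inl rfl⟩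
    · exact ⟨q / 2, by lia⟩
  · have ha := mem_zpowers_pow_of_coprime hG (odd_two_mul_add_one q).coprime_two_left a
    exact absurd (zpowers_le.2 ha hy2) hnotMem
  · have ha2 : a ^ 2 ∈ zpowers (a ^ (4 * q + 1 + 1)) := by
      convert mem_zpowers_pow_of_coprime hG (odd_two_mul_add_one q).coprime_two_left (a ^ 2) using 2
      rw [← pow_mul]
      congr 1
      ring
    obtain ⟨s, hs : a ^ s = y ^ 2⟩ :=
      (hG.isOfFinOrder two_ne_zero a).mem_powers_iff_mem_zpowers.2 hy2
    obtain ⟨t, rfl | rfl⟩ := s.even_or_odd'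
    · exact absurd (by rw [← hs, pow_mul]; exact pow_mem ha2 t) hnotMem
    · have ha := mem_zpowers_pow_of_coprime hG (odd_two_mul_add_one t).coprime_two_left a
      exact absurd (mem_zpowers_of_mem_zpowers_sq hC (hs ▸ ha)) hy
  · have hy4 := sq_sq_eq_one_of_conj_eq_pow hG hr hy2
    by_contra hinv
    refine hnotMem (hz.mem_of_sq_eq_one hG (fun hbot ↦ hinv ?_) hy4)
    rw [zpowers_eq_bot] at hbot
    rw [hr, eq_inv_iff_mul_eq_one, ← pow_succ, hbot]

lemma sq_mem_zpowers_of_sq_sq_mem (hy : (y ^ 2) ^ 2 ∈ zpowers a) : y ^ 2 ∈ zpowers a := by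
  by_contra hy2
  have hinv := hz.conj_eq_inv_of_sq_mem hG hC hN hy2 hy
  have ha : a⁻¹ = a := inv_eq_of_mul_eq_one_left <| by
    rw [← sq, sq_eq_one_of_sq_conj_eq_inv hG hN hinv]
  exact hy2 (mem_zpowers_of_conj_eq_self hC (hinv.trans ha))

lemma sq_mem_zpowers (y : G) : y ^ 2 ∈ zpowers a := by
  obtain ⟨n, hn⟩ := hG y
  replace hn : y ^ 2 ^ n ∈ zpowers a := hn ▸ one_mem _
  induction n generalizing y with
  | zero => exact pow_mem (by simpa using hn) 2
  | succ n ih =>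
    rw [pow_succ', pow_mul] at hn
    exact hz.sq_mem_zpowers_of_sq_sq_mem hG hC hN (ih (y ^ 2) hn)

lemma conj_eq_inv_of_notMem_zpowers (hy : y ∉ zpowers a) : y * a * y⁻¹ = a⁻¹ :=
  hz.conj_eq_inv_of_sq_mem hG hC hN hy (hz.sq_mem_zpowers hG hC hN y)

lemma mul_mem_zpowers_of_notMem {x : G} (hx : x ∉ zpowers a) (hy : y ∉ zpowers a) :
    x * y ∈ zpowers a := by
  refine mem_zpowers_of_conj_eq_self hC ?_
  calc x * y * a * (x * y)⁻¹ = x * (y * a * y⁻¹) * x⁻¹ := by group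
    _ = (x * a * x⁻¹)⁻¹ := by rw [hz.conj_eq_inv_of_notMem_zpowers hG hC hN hy]; group
    _ = a := by rw [hz.conj_eq_inv_of_notMem_zpowers hG hC hN hx, inv_inv]

lemma index_zpowers_eq_two (hy : y ∉ zpowers a) : (zpowers a).index = 2 := by
  refine index_eq_two_iff_exists_notMem_and.2 ⟨y, hy, fun x ↦ ?_⟩
  by_cases hx : x ∈ zpowers a
  · exact .inr hx
  · exact .inl (hz.mul_mem_zpowers_of_notMem hG hC hN hx hy)

lemma closure_pair_eq_top (hy : y ∉ zpowers a) : closure {a, y} = ⊤ := by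
  have ha_le : zpowers a ≤ closure {a, y} := zpowers_le.2 (subset_closure (.inl rfl))
  have hy_mem : y ∈ closure {a, y} := subset_closure (.inr rfl)
  refine (eq_top_iff' _).2 fun x ↦ ?_
  by_cases hx : x ∈ zpowers a
  · exact ha_le hx
  · exact (Subgroup.mul_mem_cancel_right _ hy_mem).1
      (ha_le (hz.mul_mem_zpowers_of_notMem hG hC hN hx hy))

lemma sq_eq_of_notMem_zpowers (hy : y ∉ zpowers a) : y ^ 2 = z := by
  have hinv := hz.conj_eq_inv_of_notMem_zpowers hG hC hN hy
  obtain ⟨i, hi : a ^ i = y ^ 2⟩ := hz.sq_mem_zpowers hG hC hN y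
  have hself : y ^ 2 = (y ^ 2)⁻¹ :=
    calc y ^ 2 = y * y ^ 2 * y⁻¹ := by simp only [sq]; group
      _ = (y ^ 2)⁻¹ := by rw [← hi, ← conj_zpow, hinv, inv_zpow]
  refine (hz _).1 (orderOf_eq_prime (by rw [sq, mul_eq_one_iff_eq_inv, ← hself]) fun h ↦ ?_)
  exact hy (hz.mem_of_sq_eq_one hG (zpowers_ne_bot_of_notMem hC hy) h)

end CyclicSelfCentralizing

theorem nonempty_mulEquiv_quaternionGroup [Finite G] (hz : IsUniqueInvolution z)
    (hG : IsPGroup 2 G) (hnc : ¬ IsCyclic G) {N : ℕ} (hcard : Nat.card G = 4 * N) :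
    Nonempty (G ≃* QuaternionGroup N) := by
  obtain ⟨A, hN, hC⟩ := exists_normal_centralizer_eq_self hG
  have : IsMulCommutative A := le_centralizer_iff_isMulCommutative.1 hC.ge
  have := hz.isCyclic_of_isMulCommutative hG A
  obtain ⟨a, rfl⟩ := A.isCyclic_iff_exists_zpowers_eq_top.1 this
  obtain ⟨y, hy⟩ : ∃ y, y ∉ zpowers a := by
    by_contra! hall
    exact hnc ⟨a, hall⟩
  have : NeZero N := ⟨by rintro rfl; exact Nat.card_pos.ne' hcard⟩
  have ha : orderOf a = 2 * N := by
    have hmul := (zpowers a).card_mul_index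
    rw [Nat.card_zpowers, hz.index_zpowers_eq_two hG hC.le hN hy, hcard] at hmul
    lia
  have hsq : y ^ 2 = a ^ N :=
    (hz.sq_eq_of_notMem_zpowers hG hC.le hN hy).trans (hz.pow_eq_of_orderOf_eq ha).symm
  exact nonempty_mulEquiv_quaternionGroup_of_closure_eq_top hcard (ha ▸ pow_orderOf_eq_one a) hsq
    (hz.conj_eq_inv_of_notMem_zpowers hG hC.le hN hy) (hz.closure_pair_eq_top hG hC.le hN hy)

end IsUniqueInvolution

theorem noncyclic_nonquaternion_two_group_three_subgroups
    (lam : ℕ) (hlam : 2 ≤ lam)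
    (G : Type*) [Group G] (hcard : Nat.card G = 2 ^ lam)
    (hnc : ¬ IsCyclic G)
    (hnq : ¬ Nonempty (G ≃* QuaternionGroup (2 ^ (lam - 2)))) :
    ∀ k, 1 ≤ k → k ≤ lam - 1 →
      3 ≤ Nat.card {H : Subgroup G // Nat.card H = 2 ^ k} := by
  intro k hk hklam
  have : Finite G := Nat.finite_of_card_ne_zero (hcard ▸ by positivity)
  have : Nontrivial G := not_subsingleton_iff_nontrivial.1 fun _ ↦ hnc inferInstance
  have hG : IsPGroup 2 G := IsPGroup.of_card hcard
  by_contra! hlt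
  change {H : Subgroup G | Nat.card H = 2 ^ k}.ncard < 3 at hlt
  have hdvd : 2 ^ (k + 1) ∣ Nat.card G := hcard ▸ pow_dvd_pow 2 (by lia)
  have hcyc (H : Subgroup G) (hH : Nat.card H = 2 ^ k) : IsCyclic H :=
    isCyclic_of_ncard_subgroups_lt_three hdvd hlt hH
  have hinv : {x : G | orderOf x = 2}.ncard < 3 :=
    (ncard_involutions_le_ncard_subgroups hk (dvd_of_mul_right_dvd hdvd) hcyc).trans_lt hlt
  obtain ⟨z, hz⟩ := exists_isUniqueInvolution hG hinv
  have hcard4 : Nat.card G = 4 * 2 ^ (lam - 2) := by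
    rw [hcard, ← pow_mul_pow_sub 2 hlam]
    rfl
  exact hnq (hz.nonempty_mulEquiv_quaternionGroup hG hnc hcard4)
end

section
/- If G is a group of order 2^λ with λ ≥ 5 not isomorphic to C_{2^λ}, to C_{2^{λ−1}} × C₂, or to the modular group M_{2^λ}, then G has strictly more than 3λ − 1 subgroups. -/
/-!
A noncyclic group is not the union of two proper subgroups, so besides a maximal subgroup `M` it
has at least two further maximal subgroups. Together with `⊤` these give at least three subgroups
not contained in `M`, and induction over a noncyclic `M` yields at least `3 * lam - 4` subgroups.
To gain the missing four, count the cyclic subgroups not contained in `M` by their generators: if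
all elements outside `M` satisfy `x ^ d = 1`, then each such cyclic subgroup accounts for at most
`φ d` of them.

If no maximal subgroup is cyclic, then `d = 2 ^ (lam - 2)` works, and there are at least four such
cyclic subgroups. Otherwise let `M = ⟨a⟩` be maximal, `b ∉ M`, `b ^ 2 = a ^ m` and
`b⁻¹ * a * b = a ^ r`, so that `r ^ 2 ≡ 1` and `r * m ≡ m` modulo the order of `a`. If
`r ≡ 1 [ZMOD 4]`, then some `b * a ^ j` is an involution, which either commutes with `a` or
conjugates it to `a ^ (1 + 2 ^ (lam - 2))`; both cases are excluded. So `r ≡ 3 [ZMOD 4]` for every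
`b`, whence `b ^ 4 = 1`, and at least `2 ^ (lam - 2)` cyclic subgroups lie outside `⟨a⟩`, which
with the `lam` subgroups of `⟨a⟩` and the three from before is enough because `5 ≤ lam`.
-/

open Subgroup
open scoped Nat

theorem two_pow_dvd_two_mul_of_dvd_mul {n : ℕ} {u m : ℤ} (hu : u % 4 = 2)
    (h : 2 ^ n ∣ u * m) : 2 ^ n ∣ 2 * m := by
  obtain ⟨v, rfl⟩ : 2 ∣ u := by lia
  have hv : IsCoprime (2 ^ n) v := (Int.isCoprime_two_left.2 (by grind)).pow_left
  exact hv.dvd_of_dvd_mul_left (by rwa [← mul_assoc, mul_comm v])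

theorem exists_two_pow_dvd_add_mul {n : ℕ} {u m : ℤ} (hu : u % 4 = 2) (hm : Even m) :
    ∃ j : ℤ, 2 ^ n ∣ m + u * j := by
  obtain ⟨v, rfl⟩ : 2 ∣ u := by lia
  obtain ⟨l, rfl⟩ := hm
  obtain ⟨p, q, hpq⟩ : IsCoprime (2 ^ n) v := (Int.isCoprime_two_left.2 (by grind)).pow_left
  exact ⟨-(l * q), 2 * l * p, by linear_combination (-2 * l) * hpq⟩

theorem two_pow_succ_dvd_or_dvd_sub_two_pow {n : ℕ} {x : ℤ} (h : 2 ^ (n + 1) ∣ 2 * x) :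
    2 ^ (n + 1) ∣ x ∨ 2 ^ (n + 1) ∣ x - 2 ^ n := by
  rw [pow_succ', mul_dvd_mul_iff_left two_ne_zero] at h
  obtain ⟨c, rfl⟩ := h
  rcases Int.even_or_odd' c with ⟨d, rfl | rfl⟩
  · exact .inl ⟨d, by ring⟩
  · exact .inr ⟨d, by ring⟩

section MaximalSubgroups

variable {G : Type*} [Group G]

theorem isCoatom_of_prime_index {M : Subgroup G} (h : M.index.Prime) : IsCoatom M := by
  refine ⟨fun hM ↦ h.ne_one (index_eq_one.2 hM), fun K hMK ↦ ?_⟩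
  have hdvd : K.index ∣ M.index := index_dvd_of_le hMK.le
  rcases (Nat.dvd_prime h).1 hdvd with hK | hK
  · exact index_eq_one.1 hK
  · have hmul := relIndex_mul_index hMK.le
    rw [hK, mul_eq_right₀ h.ne_zero, relIndex_eq_one] at hmul
    exact absurd hmul hMK.not_ge

theorem index_eq_of_isPGroup_of_isCoatom [Finite G] {p : ℕ} [hp : Fact p.Prime]
    (hG : IsPGroup p G) {M : Subgroup G} (hM : IsCoatom M) : M.index = p := by
  obtain ⟨k, hk⟩ := (hG.to_subgroup M).exists_card_eq
  obtain ⟨i, hi⟩ := hG.index M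
  have hi0 : i ≠ 0 := by
    rintro rfl
    exact hM.1 (index_eq_one.1 hi)
  have hdvd : p ^ (k + 1) ∣ Nat.card G := by
    rw [← M.card_mul_index, hk, hi, pow_succ]
    exact mul_dvd_mul_left _ (dvd_pow_self p hi0)
  obtain ⟨K, hK, hMK⟩ := Sylow.exists_subgroup_card_pow_succ hdvd hk
  have hKM : K ≠ M := by
    rintro rfl
    exact (Nat.pow_lt_pow_succ hp.out.one_lt).ne (hk.symm.trans hK)
  have hcard := M.card_mul_index
  rw [← card_top (G := G), ← (hM.le_iff.1 hMK).resolve_right hKM, hK, hk, pow_succ] at hcard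
  exact Nat.eq_of_mul_eq_mul_left (pow_pos hp.out.pos k) hcard

theorem card_eq_of_isCoatom {p n : ℕ} [Fact p.Prime] (hG : Nat.card G = p ^ (n + 1))
    {M : Subgroup G} (hM : IsCoatom M) : Nat.card M = p ^ n := by
  have hp : 0 < p := Nat.Prime.pos Fact.out
  have : Finite G := Nat.finite_of_card_ne_zero (by rw [hG]; positivity)
  have hcard := M.card_mul_index
  rw [index_eq_of_isPGroup_of_isCoatom (.of_card hG) hM, hG, pow_succ] at hcard
  exact Nat.eq_of_mul_eq_mul_right hp hcard

theorem not_le_of_isCoatom_of_ne {α : Type*} [PartialOrder α] [OrderTop α] {a b : α}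
    (ha : IsCoatom a) (hb : IsCoatom b) (hab : a ≠ b) : ¬ a ≤ b :=
  fun h ↦ (ha.le_iff.1 h).elim hb.1 hab.symm

theorem exists_isCoatom_mem_of_not_isCyclic [IsCoatomic (Subgroup G)] (hG : ¬ IsCyclic G)
    (g : G) : ∃ M : Subgroup G, IsCoatom M ∧ g ∈ M := by
  rcases eq_top_or_exists_le_coatom (zpowers g) with h | ⟨M, hM, h⟩
  · exact absurd (isCyclic_iff_exists_zpowers_eq_top.2 ⟨g, h⟩) hG
  · exact ⟨M, hM, h (mem_zpowers g)⟩

theorem exists_pair_isCoatom_of_not_isCyclic [IsCoatomic (Subgroup G)] (hG : ¬ IsCyclic G)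
    {M : Subgroup G} (hM : IsCoatom M) :
    ∃ K L : Subgroup G, IsCoatom K ∧ IsCoatom L ∧ K ≠ M ∧ L ≠ M ∧ K ≠ L := by
  obtain ⟨g, -, hgM⟩ := SetLike.exists_of_lt hM.lt_top
  obtain ⟨K, hK, hgK⟩ := exists_isCoatom_mem_of_not_isCyclic hG g
  have hKM : K ≠ M := by
    rintro rfl
    exact hgM hgK
  obtain ⟨h, hhM, hhK⟩ := SetLike.not_le_iff_exists.1 (not_le_of_isCoatom_of_ne hM hK hKM.symm)
  obtain ⟨L, hL, hhgL⟩ := exists_isCoatom_mem_of_not_isCyclic hG (h * g)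
  refine ⟨K, L, hK, hL, hKM, ?_, ?_⟩
  · rintro rfl
    exact hgM ((mul_mem_cancel_left hhM).1 hhgL)
  · rintro rfl
    exact hhK ((mul_mem_cancel_right hgK).1 hhgL)

theorem pow_eq_one_of_not_isCyclic {p n : ℕ} [Fact p.Prime] (hG : Nat.card G = p ^ (n + 1))
    (hnc : ¬ IsCyclic G) (x : G) : x ^ p ^ n = 1 := by
  have : Finite G := Nat.finite_of_card_ne_zero (hG ▸ pow_ne_zero _ (NeZero.ne p))
  by_contra hx
  refine hnc (isCyclic_of_orderOf_eq_card x ?_)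
  rw [hG, orderOf_eq_prime_pow hx (hG ▸ pow_card_eq_one')]

/-- If `K = ⟨c⟩` then `x` is an even power of `c`, hence lies in the index two subgroup `M`. -/
theorem not_isCyclic_of_mem_of_pow_eq_one {M K : Subgroup G} (hM : M.index = 2) {d : ℕ}
    (hd : d ≠ 0) (hK : 2 * d ∣ Nat.card K) {x : G} (hxK : x ∈ K) (hxM : x ∉ M)
    (hx : x ^ d = 1) : ¬ IsCyclic K := by
  rw [Subgroup.isCyclic_iff_exists_zpowers_eq_top]
  rintro ⟨c, rfl⟩
  obtain ⟨i, rfl⟩ := mem_zpowers_iff.1 hxK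
  have hdvd : (2 * d : ℤ) ∣ i * d := by
    rw [← zpow_natCast, ← zpow_mul, ← orderOf_dvd_iff_zpow_eq_one, ← Nat.card_zpowers] at hx
    exact_mod_cast (Int.natCast_dvd_natCast.2 hK).trans hx
  obtain ⟨j, rfl⟩ := (mul_dvd_mul_iff_right (by exact_mod_cast hd)).1 hdvd
  rw [zpow_mul, zpow_ofNat] at hxM
  exact hxM (zpow_mem (sq_mem_of_index_two hM c) j)

end MaximalSubgroups

section CountingSubgroups

variable {G : Type*} [Group G]

theorem succ_le_card_subgroup_of_card_eq_prime_pow {p n : ℕ} [hp : Fact p.Prime]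
    (hG : Nat.card G = p ^ n) : n + 1 ≤ Nat.card (Subgroup G) := by
  have : Finite G := Nat.finite_of_card_ne_zero (hG ▸ pow_ne_zero n hp.out.ne_zero)
  choose H hH using fun i : Fin (n + 1) ↦
    Sylow.exists_subgroup_card_pow_prime p (hG ▸ pow_dvd_pow p (Nat.le_of_lt_succ i.2))
  have hinj : Function.Injective H := fun i j hij ↦
    Fin.ext (Nat.pow_right_injective hp.out.two_le ((hH i).symm.trans (hij ▸ hH j)))
  simpa using Nat.card_le_card_of_injective H hinj

theorem card_subgroup_add_ncard_not_le [Finite G] (M : Subgroup G) :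
    Nat.card (Subgroup M) + {H : Subgroup G | ¬ H ≤ M}.ncard = Nat.card (Subgroup G) := by
  rw [Nat.card_congr (MapSubtype.orderIso M).toEquiv]
  exact Set.ncard_add_ncard_compl {H : Subgroup G | H ≤ M}

theorem three_le_ncard_top_or_isCoatom_not_le [Finite G] (hG : ¬ IsCyclic G) {M : Subgroup G}
    (hM : IsCoatom M) : 3 ≤ {H : Subgroup G | (H = ⊤ ∨ IsCoatom H) ∧ ¬ H ≤ M}.ncard := by
  obtain ⟨K, L, hK, hL, hKM, hLM, hKL⟩ := exists_pair_isCoatom_of_not_isCyclic hG hM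
  have hsub : {⊤, K, L} ⊆ {H : Subgroup G | (H = ⊤ ∨ IsCoatom H) ∧ ¬ H ≤ M} := by
    rintro H (rfl | rfl | rfl)
    · exact ⟨.inl rfl, hM.lt_top.not_ge⟩
    · exact ⟨.inr hK, not_le_of_isCoatom_of_ne hK hM hKM⟩
    · exact ⟨.inr hL, not_le_of_isCoatom_of_ne hL hM hLM⟩
  calc 3 = ({⊤, K, L} : Set (Subgroup G)).ncard :=
        (Set.ncard_eq_three.2 ⟨⊤, K, L, hK.1.symm, hL.1.symm, hKL, rfl⟩).symm
    _ ≤ _ := Set.ncard_le_ncard hsub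

theorem card_subgroup_add_three_le [Finite G] (hG : ¬ IsCyclic G) {M : Subgroup G}
    (hM : IsCoatom M) : Nat.card (Subgroup M) + 3 ≤ Nat.card (Subgroup G) := by
  rw [← card_subgroup_add_ncard_not_le M]
  gcongr
  exact (three_le_ncard_top_or_isCoatom_not_le hG hM).trans
    (Set.ncard_le_ncard fun _ h ↦ h.2)

theorem card_subgroup_add_ncard_isCyclic_add_three_le [Finite G] (hG : ¬ IsCyclic G)
    {M : Subgroup G} (hM : IsCoatom M)
    (hcoatom : ∀ K : Subgroup G, IsCoatom K → ¬ K ≤ M → ¬ IsCyclic K) :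
    Nat.card (Subgroup M) + {H : Subgroup G | IsCyclic H ∧ ¬ H ≤ M}.ncard + 3 ≤
      Nat.card (Subgroup G) := by
  have hdisj : Disjoint {H : Subgroup G | IsCyclic H ∧ ¬ H ≤ M}
      {H : Subgroup G | (H = ⊤ ∨ IsCoatom H) ∧ ¬ H ≤ M} := by
    rw [Set.disjoint_left]
    rintro H ⟨hcyc, hHM⟩ ⟨rfl | hH, -⟩
    · exact hG (topEquiv.isCyclic.1 hcyc)
    · exact hcoatom H hH hHM hcyc
  rw [← card_subgroup_add_ncard_not_le M, add_assoc]
  gcongr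
  calc _ ≤ {H : Subgroup G | IsCyclic H ∧ ¬ H ≤ M}.ncard +
        {H : Subgroup G | (H = ⊤ ∨ IsCoatom H) ∧ ¬ H ≤ M}.ncard := by
        gcongr
        exact three_le_ncard_top_or_isCoatom_not_le hG hM
    _ = _ := (Set.ncard_union_eq hdisj).symm
    _ ≤ _ := Set.ncard_le_ncard (Set.union_subset (fun _ h ↦ h.2) fun _ h ↦ h.2)

theorem ncard_zpowers_eq [Finite G] (H : Subgroup G) [IsCyclic H] :
    {x : G | zpowers x = H}.ncard = φ (Nat.card H) := by
  classical
  have := Fintype.ofFinite H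
  have himage : {x : G | zpowers x = H} = Subtype.val '' {y : H | orderOf y = Nat.card H} := by
    ext x
    constructor
    · rintro rfl
      exact ⟨⟨x, mem_zpowers x⟩, by rw [Set.mem_ofPred_eq, orderOf_mk, Nat.card_zpowers], rfl⟩
    · rintro ⟨y, hy, rfl⟩
      refine eq_of_le_of_card_ge (zpowers_le.2 y.2) ?_
      rw [Nat.card_zpowers, orderOf_coe, hy]
  rw [himage, Set.ncard_image_of_injective _ Subtype.val_injective,
    ← IsCyclic.card_orderOf_eq_totient (α := H) (d := Nat.card H) (by simp),
    ← Set.ncard_coe_finset, Finset.coe_filter_univ]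

theorem ncard_compl_le_totient_mul_ncard_isCyclic [Finite G] (M : Subgroup G) {d : ℕ}
    (hd : d ≠ 0) (hM : ∀ x ∉ M, x ^ d = 1) :
    (Mᶜ : Set G).ncard ≤ φ d * {H : Subgroup G | IsCyclic H ∧ ¬ H ≤ M}.ncard := by
  classical
  have := Fintype.ofFinite G
  have := Fintype.ofFinite (Subgroup G)
  rw [Set.ncard_eq_toFinset_card', Set.ncard_eq_toFinset_card']
  refine Finset.card_le_mul_card_image_of_maps_to (f := zpowers) ?_ _ ?_
  · intro x hx
    simpa using ⟨inferInstance, by simpa using hx⟩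
  · intro H hH
    obtain ⟨hcyc, hHM⟩ : IsCyclic H ∧ ¬ H ≤ M := by simpa using hH
    obtain ⟨x, rfl⟩ := (Subgroup.isCyclic_iff_exists_zpowers_eq_top H).1 hcyc
    have hx : x ^ d = 1 := hM x (by simpa using hHM)
    calc _ ≤ {y | zpowers y = zpowers x}.ncard := by
          rw [Set.ncard_eq_toFinset_card']
          exact Finset.card_le_card fun y hy ↦ by simpa using (Finset.mem_filter.1 hy).2
      _ = φ (orderOf x) := by rw [ncard_zpowers_eq, Nat.card_zpowers]
      _ ≤ φ d := Nat.le_of_dvd (Nat.totient_pos.2 (Nat.pos_of_ne_zero hd))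
          (Nat.totient_dvd_of_dvd (orderOf_dvd_of_pow_eq_one hx))

end CountingSubgroups

section CyclicIndexTwo

variable {G : Type*} [Group G] {a b : G} {r m : ℤ}

theorem conj_zpow_eq_zpow_mul (hr : b⁻¹ * a * b = a ^ r) (z : ℤ) :
    b⁻¹ * a ^ z * b = a ^ (r * z) := by
  have h := conj_zpow (i := z) (a := b⁻¹) (b := a)
  rwa [inv_inv, hr, ← zpow_mul, eq_comm] at h

theorem orderOf_dvd_sub_one_mul_add_one (hr : b⁻¹ * a * b = a ^ r) (hm : b ^ 2 = a ^ m) :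
    (orderOf a : ℤ) ∣ (r - 1) * (r + 1) := by
  have hconj : a ^ (r * r) = a :=
    calc a ^ (r * r) = b⁻¹ * (b⁻¹ * a * b) * b := by rw [hr, conj_zpow_eq_zpow_mul hr]
      _ = (b ^ 2)⁻¹ * a * b ^ 2 := by rw [pow_two]; group
      _ = a := by rw [hm]; group
  rw [orderOf_dvd_iff_zpow_eq_one, show (r - 1) * (r + 1) = r * r - 1 by ring, zpow_sub_one,
    hconj, mul_inv_cancel]

theorem orderOf_dvd_sub_one_mul (hr : b⁻¹ * a * b = a ^ r) (hm : b ^ 2 = a ^ m) :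
    (orderOf a : ℤ) ∣ (r - 1) * m := by
  rw [orderOf_dvd_iff_zpow_eq_one, sub_mul, one_mul, zpow_sub, ← conj_zpow_eq_zpow_mul hr, ← hm]
  group

theorem mul_zpow_sq_eq (hr : b⁻¹ * a * b = a ^ r) (hm : b ^ 2 = a ^ m) (j : ℤ) :
    (b * a ^ j) ^ 2 = a ^ (m + (r + 1) * j) :=
  calc (b * a ^ j) ^ 2 = b ^ 2 * (b⁻¹ * a ^ j * b) * a ^ j := by rw [pow_two, pow_two]; group
    _ = a ^ (m + (r + 1) * j) := by
      rw [hm, conj_zpow_eq_zpow_mul hr, ← zpow_add, ← zpow_add]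
      ring_nf

theorem conj_mul_zpow_eq (hr : b⁻¹ * a * b = a ^ r) (j : ℤ) :
    (b * a ^ j)⁻¹ * a * (b * a ^ j) = a ^ r :=
  calc (b * a ^ j)⁻¹ * a * (b * a ^ j) = (a ^ j)⁻¹ * (b⁻¹ * a * b) * a ^ j := by group
    _ = a ^ r := by rw [hr]; group

theorem closure_pair_eq_top_of_isCoatom (ha : IsCoatom (zpowers a)) (hb : b ∉ zpowers a) :
    closure {a, b} = ⊤ := by
  refine ha.2 _ (SetLike.lt_iff_le_and_exists.2 ⟨?_, b, subset_closure (by simp), hb⟩)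
  exact zpowers_le.2 (subset_closure (by simp))

theorem even_of_sq_eq_zpow {k : ℕ} (ha : orderOf a = 2 ^ k) (hcoatom : IsCoatom (zpowers a))
    (hG : ¬ IsCyclic G) (hb : b ∉ zpowers a) (hm : b ^ 2 = a ^ m) : Even m := by
  by_contra hodd
  rw [Int.not_even_iff_odd, ← Int.isCoprime_two_right] at hodd
  have hab : a ∈ zpowers b := by
    have hmem : a ∈ zpowers (a ^ m) := by
      rw [mem_zpowers_zpow_iff, ha, ← Int.isCoprime_iff_gcd_eq_one]
      exact_mod_cast hodd.pow_right
    exact zpowers_le.2 (hm ▸ pow_mem (mem_zpowers b) 2) hmem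
  have htop : zpowers b = ⊤ := hcoatom.2 _
    (SetLike.lt_iff_le_and_exists.2 ⟨zpowers_le.2 hab, b, mem_zpowers b, hb⟩)
  exact hG (isCyclic_iff_exists_zpowers_eq_top.2 ⟨b, htop⟩)

/-- As `(b * a ^ j) ^ 2 = a ^ (m + (r + 1) * j)` and `r + 1` is twice an odd number, a suitable `j`
makes `b * a ^ j` an involution. -/
theorem exists_involution_of_emod_four_eq_one {k : ℕ} (ha : orderOf a = 2 ^ (k + 1))
    (hb : b ∉ zpowers a) (hr : b⁻¹ * a * b = a ^ r) (hm : b ^ 2 = a ^ m) (hm_even : Even m)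
    (hr4 : r % 4 = 1) :
    ∃ c ∉ zpowers a, orderOf c = 2 ∧ (Commute a c ∨ c⁻¹ * a * c = a ^ (1 + 2 ^ k)) := by
  have hpow (z : ℤ) : a ^ z = 1 ↔ 2 ^ (k + 1) ∣ z := by
    rw [← orderOf_dvd_iff_zpow_eq_one, ha]
    norm_cast
  obtain ⟨j, hj⟩ := exists_two_pow_dvd_add_mul (n := k + 1) (u := r + 1) (by lia) hm_even
  have hc : b * a ^ j ∉ zpowers a := by
    rwa [mul_mem_cancel_right (zpow_mem (mem_zpowers a) j)]
  refine ⟨b * a ^ j, hc, orderOf_eq_prime ?_ (ne_of_mem_of_not_mem (one_mem _) hc).symm, ?_⟩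
  · rw [mul_zpow_sq_eq hr hm, hpow]
    exact hj
  · have hconj := conj_mul_zpow_eq hr j
    have hdvd : 2 ^ (k + 1) ∣ (r + 1) * (r - 1) := by
      have h := orderOf_dvd_sub_one_mul_add_one hr hm
      rw [ha, mul_comm] at h
      exact_mod_cast h
    rcases two_pow_succ_dvd_or_dvd_sub_two_pow
      (two_pow_dvd_two_mul_of_dvd_mul (by lia) hdvd) with h | h
    · left
      rw [← hpow, zpow_sub_one, mul_inv_eq_one] at h
      rwa [h, mul_assoc, inv_mul_eq_iff_eq_mul] at hconj
    · right
      rw [hconj]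
      rwa [← hpow, sub_sub, zpow_sub, mul_inv_eq_one, show (1 + 2 ^ k : ℤ) = (1 + 2 ^ k : ℕ) by
        push_cast; rfl, zpow_natCast] at h

theorem pow_four_eq_one_of_emod_four_eq_three {k : ℕ} (ha : orderOf a = 2 ^ k)
    (hr : b⁻¹ * a * b = a ^ r) (hm : b ^ 2 = a ^ m) (hr4 : r % 4 = 3) : b ^ 4 = 1 := by
  have hdvd : 2 ^ k ∣ (r - 1) * m := by
    have h := orderOf_dvd_sub_one_mul hr hm
    rw [ha] at h
    exact_mod_cast h
  calc b ^ 4 = (b ^ 2) ^ 2 := by rw [← pow_mul]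
    _ = a ^ (2 * m) := by rw [hm, ← zpow_natCast, ← zpow_mul, mul_comm]; rfl
    _ = 1 := by
      rw [← orderOf_dvd_iff_zpow_eq_one, ha]
      exact_mod_cast two_pow_dvd_two_mul_of_dvd_mul (by lia) hdvd

theorem exists_involution_or_forall_pow_four_eq_one {k : ℕ} (ha : orderOf a = 2 ^ (k + 1))
    (hindex : (zpowers a).index = 2) (hG : ¬ IsCyclic G) :
    (∃ b ∉ zpowers a, orderOf b = 2 ∧ (Commute a b ∨ b⁻¹ * a * b = a ^ (1 + 2 ^ k))) ∨
      ∀ x ∉ zpowers a, x ^ 4 = 1 := by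
  rw [or_iff_not_imp_right]
  intro hx
  push Not at hx
  obtain ⟨b, hb, hb4⟩ := hx
  have hnormal : (zpowers a).Normal := normal_of_index_eq_two hindex
  obtain ⟨m, hm⟩ := mem_zpowers_iff.1 (sq_mem_of_index_two hindex b)
  obtain ⟨r, hr⟩ := mem_zpowers_iff.1 (hnormal.conj_mem' a (mem_zpowers a) b)
  have hm_even : Even m :=
    even_of_sq_eq_zpow ha (isCoatom_of_prime_index (hindex ▸ Nat.prime_two)) hG hb hm.symm
  have hr_odd : Odd r := by
    have h := (dvd_pow_self (2 : ℤ) k.succ_ne_zero).trans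
      (by exact_mod_cast ha ▸ orderOf_dvd_sub_one_mul_add_one hr.symm hm.symm)
    rcases Int.even_mul.1 (even_iff_two_dvd.2 h) with h | h <;> grind
  have hr4 : r % 4 ≠ 3 := fun h ↦
    hb4 (pow_four_eq_one_of_emod_four_eq_three ha hr.symm hm.symm h)
  exact exists_involution_of_emod_four_eq_one ha hb hr.symm hm.symm hm_even (by grind)

theorem nonempty_mulEquiv_zmod_prod_zmod (hab : Commute a b)
    (hcompl : IsComplement' (zpowers a) (zpowers b)) :
    Nonempty (G ≃* Multiplicative (ZMod (orderOf a) × ZMod (orderOf b))) := by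
  have hcomm (x : zpowers a) (y : zpowers b) :
      Commute ((zpowers a).subtype x) ((zpowers b).subtype y) := by
    obtain ⟨⟨_, i, rfl⟩, ⟨_, j, rfl⟩⟩ := x, y
    exact hab.zpow_zpow i j
  let e : zpowers a × zpowers b ≃* G := MulEquiv.ofBijective
    ((zpowers a).subtype.noncommCoprod (zpowers b).subtype hcomm) hcompl
  let ea : zpowers a ≃* Multiplicative (ZMod (orderOf a)) :=
    mulEquivOfCyclicCardEq
      (by rw [Nat.card_zpowers, Nat.card_congr Multiplicative.toAdd, Nat.card_zmod])
  let eb : zpowers b ≃* Multiplicative (ZMod (orderOf b)) :=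
    mulEquivOfCyclicCardEq
      (by rw [Nat.card_zpowers, Nat.card_congr Multiplicative.toAdd, Nat.card_zmod])
  exact ⟨e.symm.trans ((ea.prodCongr eb).trans (MulEquiv.prodMultiplicative _ _).symm)⟩

theorem isComplement'_zpowers_of_prime_index [Finite G] {M : Subgroup G} {x : G}
    (hM : M.index.Prime) (hx : orderOf x = M.index) (hxM : x ∉ M) :
    IsComplement' M (zpowers x) := by
  have hcard : Nat.card (zpowers x) = M.index := by rw [Nat.card_zpowers, hx]
  refine isComplement'_of_card_mul_and_disjoint (by rw [hcard, M.card_mul_index]) ?_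
  have hdvd : Nat.card (M ⊓ zpowers x : Subgroup G) ∣ M.index :=
    hcard ▸ card_dvd_of_le inf_le_right
  rcases (Nat.dvd_prime hM).1 hdvd with h | h
  · exact disjoint_iff.2 (card_eq_one.1 h)
  · have heq := eq_of_le_of_card_ge inf_le_right (hcard.trans h.symm).le
    exact absurd (inf_eq_right.1 heq (mem_zpowers x)) hxM

end CyclicIndexTwo

theorem exists_isCoatom_not_isCyclic {n : ℕ} (hn : 3 ≤ n) {G : Type*} [Group G]
    (hG : Nat.card G = 2 ^ (n + 1)) (hnc : ¬ IsCyclic G) :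
    ∃ M : Subgroup G, IsCoatom M ∧ ¬ IsCyclic M := by
  obtain ⟨k, rfl⟩ := Nat.exists_eq_add_of_le' hn
  have : Finite G := Nat.finite_of_card_ne_zero (by rw [hG]; positivity)
  obtain ⟨M, hM, -⟩ := exists_isCoatom_mem_of_not_isCyclic hnc 1
  by_cases hcyc : IsCyclic M
  swap
  · exact ⟨M, hM, hcyc⟩
  obtain ⟨a, rfl⟩ := (Subgroup.isCyclic_iff_exists_zpowers_eq_top M).1 hcyc
  have hindex := index_eq_of_isPGroup_of_isCoatom (.of_card hG) hM
  have ha : orderOf a = 2 ^ (k + 3) := by rw [← Nat.card_zpowers, card_eq_of_isCoatom hG hM]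
  obtain ⟨x, hxa, hx⟩ : ∃ x ∉ zpowers a, x ^ 4 = 1 := by
    rcases exists_involution_or_forall_pow_four_eq_one ha hindex hnc with ⟨b, hba, hb, -⟩ | h
    · exact ⟨b, hba, orderOf_dvd_iff_pow_eq_one.1 (by rw [hb]; norm_num)⟩
    · obtain ⟨x, -, hx⟩ := SetLike.exists_of_lt hM.lt_top
      exact ⟨x, hx, h x hx⟩
  obtain ⟨K, hK, hxK⟩ := exists_isCoatom_mem_of_not_isCyclic hnc x
  refine ⟨K, hK, not_isCyclic_of_mem_of_pow_eq_one hindex four_ne_zero ?_ hxK hxa hx⟩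
  rw [card_eq_of_isCoatom hG hK]
  exact pow_dvd_pow 2 hn

theorem three_mul_le_card_subgroup_add_one {n : ℕ} (hn : 2 ≤ n) {G : Type*} [Group G]
    (hG : Nat.card G = 2 ^ (n + 1)) (hnc : ¬ IsCyclic G) :
    3 * n ≤ Nat.card (Subgroup G) + 1 := by
  have : Finite G := Nat.finite_of_card_ne_zero (by rw [hG]; positivity)
  induction n, hn using Nat.le_induction generalizing G with
  | base =>
    obtain ⟨M, hM, -⟩ := exists_isCoatom_mem_of_not_isCyclic hnc 1
    have hsub := card_subgroup_add_three_le hnc hM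
    have hM_sub := succ_le_card_subgroup_of_card_eq_prime_pow (card_eq_of_isCoatom hG hM)
    lia
  | succ n hn ih =>
    obtain ⟨M, hM, hMnc⟩ := exists_isCoatom_not_isCyclic (by lia) hG hnc
    have hsub := card_subgroup_add_three_le hnc hM
    have hM_sub := ih (card_eq_of_isCoatom hG hM) hMnc inferInstance
    lia

theorem two_pow_le_totient_mul_ncard_isCyclic {n d : ℕ} {G : Type*} [Group G]
    (hG : Nat.card G = 2 ^ (n + 1)) {M : Subgroup G} (hM : IsCoatom M) (hd : d ≠ 0)
    (hpow : ∀ x ∉ M, x ^ d = 1) :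
    2 ^ n ≤ φ d * {H : Subgroup G | IsCyclic H ∧ ¬ H ≤ M}.ncard := by
  have : Finite G := Nat.finite_of_card_ne_zero (by rw [hG]; positivity)
  have hcompl := Set.ncard_add_ncard_compl (M : Set G)
  rw [← Nat.card_coe_set_eq, SetLike.coe_sort_coe, card_eq_of_isCoatom hG hM, hG, pow_succ]
    at hcompl
  have hle := ncard_compl_le_totient_mul_ncard_isCyclic M hd hpow
  lia

theorem three_mul_le_card_subgroup_of_forall_coatom_not_isCyclic {k : ℕ} (hk : 2 ≤ k)
    {G : Type*} [Group G] (hG : Nat.card G = 2 ^ (k + 2)) (hnc : ¬ IsCyclic G)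
    (hcoatom : ∀ M : Subgroup G, IsCoatom M → ¬ IsCyclic M) :
    3 * (k + 2) ≤ Nat.card (Subgroup G) := by
  have : Finite G := Nat.finite_of_card_ne_zero (by rw [hG]; positivity)
  obtain ⟨M, hM, -⟩ := exists_isCoatom_mem_of_not_isCyclic hnc 1
  have hpow (x : G) : x ^ 2 ^ k = 1 := by
    obtain ⟨K, hK, hxK⟩ := exists_isCoatom_mem_of_not_isCyclic hnc x
    have h := pow_eq_one_of_not_isCyclic (card_eq_of_isCoatom hG hK) (hcoatom K hK) ⟨x, hxK⟩
    exact congrArg Subtype.val h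
  have hcyc : 4 ≤ {H : Subgroup G | IsCyclic H ∧ ¬ H ≤ M}.ncard := by
    have h := two_pow_le_totient_mul_ncard_isCyclic hG hM (by positivity) fun x _ ↦ hpow x
    obtain ⟨j, rfl⟩ := Nat.exists_eq_add_of_le' (one_le_two.trans hk)
    rw [Nat.totient_prime_pow_succ Nat.prime_two, show 2 ^ (j + 1 + 1) = 2 ^ j * 4 by ring,
      Nat.add_one_sub_one, mul_one] at h
    exact Nat.le_of_mul_le_mul_left h (by positivity)
  have hM_sub := three_mul_le_card_subgroup_add_one hk (card_eq_of_isCoatom hG hM) (hcoatom M hM)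
  have hsub := card_subgroup_add_ncard_isCyclic_add_three_le hnc hM fun K hK _ ↦ hcoatom K hK
  lia

theorem three_mul_le_card_subgroup_of_forall_pow_four_eq_one {k : ℕ} (hk : 3 ≤ k)
    {G : Type*} [Group G] (hG : Nat.card G = 2 ^ (k + 2)) (hnc : ¬ IsCyclic G)
    {M : Subgroup G} (hM : IsCoatom M) (hpow : ∀ x ∉ M, x ^ 4 = 1) :
    3 * (k + 2) ≤ Nat.card (Subgroup G) := by
  have : Finite G := Nat.finite_of_card_ne_zero (by rw [hG]; positivity)
  have hcoatom (K : Subgroup G) (hK : IsCoatom K) (hKM : ¬ K ≤ M) : ¬ IsCyclic K := by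
    obtain ⟨x, hxK, hxM⟩ := SetLike.not_le_iff_exists.1 hKM
    refine not_isCyclic_of_mem_of_pow_eq_one
      (index_eq_of_isPGroup_of_isCoatom (.of_card hG) hM) four_ne_zero ?_ hxK hxM (hpow x hxM)
    rw [card_eq_of_isCoatom hG hK]
    exact pow_dvd_pow 2 (by lia : 3 ≤ k + 1)
  have hcyc : 2 ^ k ≤ {H : Subgroup G | IsCyclic H ∧ ¬ H ≤ M}.ncard := by
    have h := two_pow_le_totient_mul_ncard_isCyclic hG hM four_ne_zero hpow
    rw [show φ 4 = 2 by decide, pow_succ] at h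
    lia
  have hM_sub := succ_le_card_subgroup_of_card_eq_prime_pow (card_eq_of_isCoatom hG hM)
  have hsub := card_subgroup_add_ncard_isCyclic_add_three_le hnc hM hcoatom
  have hlin : 2 * k + 1 ≤ 2 ^ k := by
    obtain ⟨j, rfl⟩ := Nat.exists_eq_add_of_le' hk
    rw [pow_add]
    have hj : j < 2 ^ j := j.lt_two_pow_self
    lia
  lia

theorem two_group_strict_subgroup_bound
    (lam : ℕ) (hlam : 5 ≤ lam)
    (G : Type*) [Group G] (hcard : Nat.card G = 2 ^ lam)
    (hnc : ¬ IsCyclic G)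
    (hnab : ¬ Nonempty (G ≃* Multiplicative (ZMod (2 ^ (lam - 1)) × ZMod 2)))
    (hnmod : ¬ ∃ a b : G, orderOf a = 2 ^ (lam - 1) ∧ orderOf b = 2 ∧
      b⁻¹ * a * b = a ^ (1 + 2 ^ (lam - 2)) ∧ Subgroup.closure {a, b} = ⊤) :
    3 * lam - 1 < Nat.card (Subgroup G) := by
  obtain ⟨k, rfl⟩ := Nat.exists_eq_add_of_le' (show 2 ≤ lam by lia)
  simp only [Nat.add_sub_cancel, show k + 2 - 1 = k + 1 by rfl] at hnab hnmod
  suffices 3 * (k + 2) ≤ Nat.card (Subgroup G) by lia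
  by_cases hcoatom : ∀ M : Subgroup G, IsCoatom M → ¬ IsCyclic M
  · exact three_mul_le_card_subgroup_of_forall_coatom_not_isCyclic (by lia) hcard hnc hcoatom
  obtain ⟨M, hM, hMcyc⟩ : ∃ M : Subgroup G, IsCoatom M ∧ IsCyclic M := by simpa using hcoatom
  have : Finite G := Nat.finite_of_card_ne_zero (by rw [hcard]; positivity)
  obtain ⟨a, rfl⟩ := (Subgroup.isCyclic_iff_exists_zpowers_eq_top M).1 hMcyc
  have hindex := index_eq_of_isPGroup_of_isCoatom (.of_card hcard) hM
  have ha : orderOf a = 2 ^ (k + 1) := by rw [← Nat.card_zpowers, card_eq_of_isCoatom hcard hM]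
  rcases exists_involution_or_forall_pow_four_eq_one ha hindex hnc with
    ⟨b, hba, hb, hab | hconj⟩ | hpow
  · have hiso := nonempty_mulEquiv_zmod_prod_zmod hab <|
      isComplement'_zpowers_of_prime_index (hindex ▸ Nat.prime_two) (hb.trans hindex.symm) hba
    rw [ha, hb] at hiso
    exact absurd hiso hnab
  · exact absurd ⟨a, b, ha, hb, hconj, closure_pair_eq_top_of_isCoatom hM hba⟩ hnmod
  · exact three_mul_le_card_subgroup_of_forall_pow_four_eq_one (by lia) hcard hnc hM hpow
end
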